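/- Let l be a symmetric loss with Σ_{y=1}^C l(z,y) = K for all z. Under uniform label noise of level ρ, for every random variable Z = f(X) with f measurable such that l(Z,Y) and l(Z,Ȳ) are integrable, it holds that E[l(Z,Ȳ)] = ρK/(C−1) + (1 − ρC/(C−1))·E[l(Z,Y)]. -/

import Mathlib

open MeasureTheory

/-- `Ybar` is a uniformly noisy version of `Y` at noise level `ρ`: for every function
`h : 𝒳 × [C] → ℝ` (with the relevant integrability),
`E[h(X,Ȳ)] = (1−ρ)·E[h(X,Y)] + (ρ/(C−1))·E[Σ_{i≠Y} h(X,i)]`,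
which is the expectation form of `P(Ȳ=i | Y,X) = ρ/(C−1)` for `i ≠ Y` and `1−ρ` for `i = Y`. -/
def UniformLabelNoise {Ω 𝒳 : Type*} [MeasurableSpace Ω] (P : Measure Ω) (C : ℕ) (ρ : ℝ)
    (X : Ω → 𝒳) (Y Ybar : Ω → Fin C) : Prop :=
  ∀ h : 𝒳 → Fin C → ℝ,
    Integrable (fun ω => h (X ω) (Ybar ω)) P →
    Integrable (fun ω => h (X ω) (Y ω)) P →
    (∀ i, Integrable (fun ω => h (X ω) i) P) →
    ∫ ω, h (X ω) (Ybar ω) ∂P =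
      (1 - ρ) * ∫ ω, h (X ω) (Y ω) ∂P
        + (ρ / ((C : ℝ) - 1)) * ∫ ω, (∑ i : Fin C, if i = Y ω then 0 else h (X ω) i) ∂P

/-- For a symmetric loss `l` (with `Σ_y l(z,y) = K` for all `z`), under uniform label
noise of level `ρ`, for every `Z = f(X)` with `f` measurable and the losses integrable,
`E[l(Z,Ȳ)] = ρK/(C−1) + (1 − ρC/(C−1))·E[l(Z,Y)]`. -/
theorem stmt1
    {Ω 𝒳 : Type*} [MeasurableSpace Ω] [MeasurableSpace 𝒳]
    (P : Measure Ω) [IsProbabilityMeasure P]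
    (C : ℕ) (hC : 2 ≤ C) (ρ : ℝ) (hρ0 : 0 ≤ ρ) (hρ : ρ < ((C : ℝ) - 1) / C)
    (X : Ω → 𝒳) (Y Ybar : Ω → Fin C)
    (hX : Measurable X) (hY : Measurable Y) (hYbar : Measurable Ybar)
    (hnoise : UniformLabelNoise P C ρ X Y Ybar)
    (l : (Fin C → ℝ) → Fin C → ℝ) (K : ℝ)
    (hsym : ∀ z, ∑ y : Fin C, l z y = K)
    (f : 𝒳 → Fin C → ℝ) (hf : Measurable f)
    (hint1 : Integrable (fun ω => l (f (X ω)) (Ybar ω)) P)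
    (hint2 : Integrable (fun ω => l (f (X ω)) (Y ω)) P)
    (hint3 : ∀ i, Integrable (fun ω => l (f (X ω)) i) P) :
    ∫ ω, l (f (X ω)) (Ybar ω) ∂P =
      ρ * K / ((C : ℝ) - 1) + (1 - ρ * C / ((C : ℝ) - 1)) * ∫ ω, l (f (X ω)) (Y ω) ∂P := by
  have hC1 : (C : ℝ) - 1 ≠ 0 := by
    have : (2 : ℝ) ≤ C := by exact_mod_cast hC
    linarith
  have hsum (ω : Ω) :
      (∑ i : Fin C, if i = Y ω then 0 else l (f (X ω)) i) = K - l (f (X ω)) (Y ω) := by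
    rw [← hsym (f (X ω)), eq_sub_iff_add_eq, ← Finset.sum_erase_add _ _ (Finset.mem_univ (Y ω)),
      ← Finset.sum_erase_add Finset.univ (l (f (X ω))) (Finset.mem_univ (Y ω)), if_pos rfl,
      add_zero]
    congr 1
    exact Finset.sum_congr rfl fun i hi => if_neg (Finset.ne_of_mem_erase hi)
  rw [hnoise (fun x => l (f x)) hint1 hint2 hint3]
  simp only [hsum]
  rw [integral_sub (integrable_const K) hint2, integral_const, probReal_univ, one_smul]
  field_simp
  ring
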